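/- Let μ ∈ ℂ, α := q^μ, and let R > 1. Then for every x ∈ ℂ, (1/(2πi))·∮_{|t|=R} [θ(q, −α/t) / ((1/t;q)_∞)] · e^{−xt} · dt/t = (q^{1−μ};q)_∞ · F(μ;q,x), where the integral is taken counterclockwise over the circle |t| = R (on which (1/t;q)_∞ has no zero). In particular the left-hand side is, as a function of x, the unique entire solution of y′(x) = α·y(qx) − y(x) with y(0) = (q^{1−μ};q)_∞. -/

import Mathlib

/-!
On `|t| = R > 1` each factor of the integrand has an absolutely convergent expansion: `e^{-xt}` in
powers of `t`, `θ(q,-α/t)` by definition, and `1/(1/t;q)_∞ = ∑ t^{-n}/(q;q)_n` by Euler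
(`inv_series_mul`). The triple product series may be integrated term by term (`hasSum_residue`),
and only the total exponent `-1` survives. Hence the integral equals `∑_k c_k (-x)^k/k!`, with
`c_k = ∑_n q^{(k-n)(k-n-1)/2} (-α)^{k-n}/(q;q)_n`. Completing the square identifies `c_k` with
`(-α)^k q^{k(k-1)/2} (q^{1-k}/α;q)_∞`, by Euler's other expansion (`euler_eq`), and this is
`(q/α;q)_∞ (α;q)_k` (`coeff_eq`).

Both of Euler's expansions come from a first-order `q`-difference equation: iterating it moves the
argument from `z` to `q^N z`, and the series tends to its constant term as `N → ∞`.

For uniqueness, the `n`-th derivative of `y'(x) = α y(qx) - y(x)` at `0` reads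
`y^{(n+1)}(0) = -(1 - α q^n) y^{(n)}(0)`, so an entire solution has the Taylor series of
`y(0) F(μ;q,x)` (`entire_solution_eq`).
-/

/-- `(a;c)_n = ∏_{j=0}^{n-1} (1 - a c^j)`. -/
noncomputable def qPoch (a c : ℂ) (n : ℕ) : ℂ := ∏ j ∈ Finset.range n, (1 - a * c ^ j)

/-- `(a;c)_∞ = ∏_{j=0}^{∞} (1 - a c^j)`. -/
noncomputable def qPochInf (a c : ℂ) : ℂ := ∏' j : ℕ, (1 - a * c ^ j)

/-- `q^μ := exp (μ log q)` for real `q > 0` and complex `μ`. -/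
noncomputable def qpow (q : ℝ) (μ : ℂ) : ℂ := Complex.exp (μ * Real.log q)

/-- `F(μ;q,x) = Σ_{n≥0} ((q^μ;q)_n / n!) (-x)^n`. -/
noncomputable def F (μ : ℂ) (q : ℝ) (x : ℂ) : ℂ :=
  ∑' n : ℕ, qPoch (qpow q μ) (q : ℂ) n / (Nat.factorial n : ℂ) * (-x) ^ n

/-- `(a)_n = a (a+1) ⋯ (a+n-1)`. -/
noncomputable def poch (a : ℂ) (n : ℕ) : ℂ := ∏ j ∈ Finset.range n, (a + (j : ℂ))

/-- `G(a;q,x) = Σ_{n≥0} ((a)_n q^{n(n+1)/2} / (q;q)_n) (-x)^n`. -/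
noncomputable def G (a : ℂ) (q : ℝ) (x : ℂ) : ℂ :=
  ∑' n : ℕ, poch a n * (q : ℂ) ^ (n * (n + 1) / 2) / qPoch (q : ℂ) (q : ℂ) n * (-x) ^ n

/-- Jacobi theta function `θ(p,x) = Σ_{n∈ℤ} p^{n(n-1)/2} x^n`. -/
noncomputable def theta (p : ℝ) (x : ℂ) : ℂ :=
  ∑' n : ℤ, (p : ℂ) ^ (n * (n - 1) / 2) * x ^ n

open Filter Topology

/-! ### Quadratic exponents and summability -/

lemma two_mul_tri (n : ℤ) : 2 * (n * (n - 1) / 2) = n * (n - 1) :=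
  Int.two_mul_ediv_two_of_even (Int.even_mul_pred_self n)

lemma tri_succ (n : ℤ) : (n + 1) * (n + 1 - 1) / 2 = n * (n - 1) / 2 + n := by
  have h1 := two_mul_tri n
  have h2 := two_mul_tri (n + 1)
  linarith

lemma tri_neg_succ (n : ℤ) :
    (-(n + 1)) * (-(n + 1) - 1) / 2 = (-n) * (-n - 1) / 2 + (n + 1) := by
  have h1 := two_mul_tri (-n)
  have h2 := two_mul_tri (-(n + 1))
  linarith

/-- Completing the square in the exponent of the theta coefficients. -/
lemma tri_sub (k n : ℤ) :
    (k - n) * (k - n - 1) / 2 = k * (k - 1) / 2 + n * (n - 1) / 2 + n * (1 - k) := by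
  have h1 := two_mul_tri k
  have h2 := two_mul_tri n
  have h3 := two_mul_tri (k - n)
  linarith

/-- The ratio test in recursive form, which allows vanishing terms. -/
lemma summable_norm_of_rec {a r : ℕ → ℂ} {l : ℂ} (h : ∀ n, a (n + 1) = a n * r n)
    (hr : Tendsto r atTop (𝓝 l)) (hl : ‖l‖ < 1) : Summable (fun n => ‖a n‖) := by
  obtain ⟨ρ, h1, h2⟩ := exists_between hl
  refine summable_of_ratio_norm_eventually_le h2 ?_
  filter_upwards [hr.norm.eventually_le_const h1] with n hn
  rw [norm_norm, norm_norm, h, norm_mul, mul_comm]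
  gcongr

section
variable {q : ℝ}

lemma tendsto_qpow_zero (hq0 : 0 < q) (hq1 : q < 1) :
    Tendsto (fun n : ℕ => (q : ℂ) ^ n) atTop (𝓝 0) :=
  tendsto_pow_atTop_nhds_zero_of_norm_lt_one (by simpa [abs_of_pos hq0] using hq1)

lemma one_sub_ne (hq0 : 0 < q) (hq1 : q < 1) (n : ℕ) : (1 : ℂ) - q * q ^ n ≠ 0 := by
  intro h
  have h1 : q * q ^ n < 1 := by
    rw [← pow_succ']; exact pow_lt_one₀ hq0.le hq1 (by simp)
  have h2 : (1 : ℝ) - q * q ^ n = 0 := by exact_mod_cast h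
  linarith

lemma qPoch_succ (a c : ℂ) (n : ℕ) : qPoch a c (n + 1) = qPoch a c n * (1 - a * c ^ n) := by
  simp [qPoch, Finset.prod_range_succ]

lemma qPoch_ne (hq0 : 0 < q) (hq1 : q < 1) (n : ℕ) : qPoch (q : ℂ) q n ≠ 0 :=
  Finset.prod_ne_zero_iff.2 fun j _ => one_sub_ne hq0 hq1 j

lemma summable_theta (hq0 : 0 < q) (hq1 : q < 1) {y : ℂ} (hy : y ≠ 0) :
    Summable (fun n : ℤ => ‖(q : ℂ) ^ (n * (n - 1) / 2) * y ^ n‖) := by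
  have hqc : (q : ℂ) ≠ 0 := by exact_mod_cast hq0.ne'
  have ht := tendsto_qpow_zero hq0 hq1
  refine Summable.of_nat_of_neg ?_ ?_
  · refine summable_norm_of_rec (a := fun n : ℕ => (q : ℂ) ^ ((n : ℤ) * (n - 1) / 2) * y ^ (n : ℤ))
      (r := fun n => (q : ℂ) ^ n * y) (l := 0) (fun n => ?_) (by simpa using ht.mul_const y) (by simp)
    simp only [Nat.cast_succ]
    rw [tri_succ, zpow_add₀ hqc, zpow_add₀ hy, zpow_one, zpow_natCast]
    ring
  · refine summable_norm_of_rec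
      (a := fun n : ℕ => (q : ℂ) ^ ((-(n : ℤ)) * (-n - 1) / 2) * y ^ (-(n : ℤ)))
      (r := fun n => (q : ℂ) ^ (n + 1) * y⁻¹) (l := 0) (fun n => ?_)
      (by simpa using ((tendsto_add_atTop_iff_nat 1).2 ht).mul_const y⁻¹) (by simp)
    have h1 : -((n : ℤ) + 1) = -n + -1 := by ring
    have h2 : y ^ (-((n : ℤ) + 1)) = y ^ (-(n : ℤ)) * y⁻¹ := by
      rw [h1, zpow_add₀ hy, zpow_neg_one]
    simp only [Nat.cast_succ]
    rw [tri_neg_succ, zpow_add₀ hqc, h2, zpow_add₀ hqc, zpow_natCast, zpow_one, pow_succ]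
    ring

lemma summable_inv (hq0 : 0 < q) (hq1 : q < 1) {z : ℂ} (hz : ‖z‖ < 1) :
    Summable (fun n : ℕ => ‖(qPoch (q : ℂ) q n)⁻¹ * z ^ n‖) := by
  have ht := tendsto_qpow_zero hq0 hq1
  refine summable_norm_of_rec (r := fun n => (1 - (q : ℂ) * q ^ n)⁻¹ * z) (l := z) (fun n => ?_) ?_ hz
  · rw [qPoch_succ, mul_inv, pow_succ]; ring
  · have := (((ht.const_mul (q : ℂ)).const_sub 1).inv₀ (by simp)).mul_const z
    simpa using this

lemma summable_euler (hq0 : 0 < q) (hq1 : q < 1) (z : ℂ) :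
    Summable (fun n : ℕ =>
      ‖(q : ℂ) ^ ((n : ℤ) * (n - 1) / 2) * (-1) ^ n * (qPoch (q : ℂ) q n)⁻¹ * z ^ n‖) := by
  have hqc : (q : ℂ) ≠ 0 := by exact_mod_cast hq0.ne'
  have ht := tendsto_qpow_zero hq0 hq1
  refine summable_norm_of_rec (r := fun n => -(q : ℂ) ^ n * (1 - (q : ℂ) * q ^ n)⁻¹ * z) (l := 0)
    (fun n => ?_) ?_ (by simp)
  · simp only [Nat.cast_succ]
    rw [qPoch_succ, mul_inv, pow_succ, tri_succ, zpow_add₀ hqc, zpow_natCast, pow_succ]; ring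
  · have := (ht.neg.mul (((ht.const_mul (q : ℂ)).const_sub 1).inv₀ (by simp))).mul_const z
    simpa using this

/-! ### Euler's two expansions of the infinite `q`-Pochhammer symbol -/

lemma tendsto_powerSeries (hq0 : 0 < q) (hq1 : q < 1) {a : ℕ → ℂ} {z : ℂ}
    (h : Summable fun n => ‖a n * z ^ n‖) :
    Tendsto (fun N : ℕ => ∑' n, a n * (z * (q : ℂ) ^ N) ^ n) atTop (𝓝 (a 0)) := by
  have ht := tendsto_qpow_zero hq0 hq1
  have h0 : ∑' n, a n * (z * 0) ^ n = a 0 := by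
    rw [tsum_eq_single 0]
    · simp
    · intro n hn; simp [hn]
  rw [← h0]
  refine tendsto_tsum_of_dominated_convergence h
    (fun n => ((ht.const_mul z).pow n).const_mul (a n)) (Eventually.of_forall fun N n => ?_)
  rw [mul_pow, ← mul_assoc, norm_mul]
  refine mul_le_of_le_one_right (norm_nonneg _) ?_
  rw [norm_pow, norm_pow, Complex.norm_real, Real.norm_of_nonneg hq0.le]
  exact pow_le_one₀ (by positivity) (pow_le_one₀ hq0.le hq1.le)

lemma tendsto_qPoch (hq0 : 0 < q) (hq1 : q < 1) (a : ℂ) :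
    Tendsto (fun N : ℕ => qPoch a q N) atTop (𝓝 (qPochInf a q)) := by
  have hs : Summable fun j : ℕ => ‖-(a * (q : ℂ) ^ j)‖ := by
    simp only [norm_neg, norm_mul, norm_pow, Complex.norm_real, Real.norm_of_nonneg hq0.le]
    exact (summable_geometric_of_lt_one hq0.le hq1).mul_left _
  have hm := multipliable_one_add_of_summable hs
  simpa only [← sub_eq_add_neg, qPoch, qPochInf] using hm.hasProd.tendsto_prod_nat

/-- `1/(z;q)_∞ = ∑ zⁿ/(q;q)_n` for `|z| < 1`: the series `f` satisfies `(1 - z) f(z) = f(qz)`,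
and iterating pushes the argument to `0`. -/
lemma inv_series_mul (hq0 : 0 < q) (hq1 : q < 1) {z : ℂ} (hz : ‖z‖ < 1) :
    (∑' n : ℕ, (qPoch (q : ℂ) q n)⁻¹ * z ^ n) * qPochInf z q = 1 := by
  set f : ℂ → ℂ := fun z => ∑' n : ℕ, (qPoch (q : ℂ) q n)⁻¹ * z ^ n with hf
  have hqn : ‖(q : ℂ)‖ = q := by simp [abs_of_pos hq0]
  have step : ∀ w : ℂ, ‖w‖ < 1 → f w * (1 - w) = f (w * q) := by
    intro w hw
    have hwq : ‖w * q‖ < 1 := by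
      rw [norm_mul, hqn]; nlinarith [norm_nonneg w]
    have s1 := (summable_inv hq0 hq1 hw).of_norm
    have s2 := (summable_inv hq0 hq1 hwq).of_norm
    have h1 : f w - f (w * q) = w * f w := by
      simp only [hf]
      rw [← s1.tsum_sub s2, (s1.sub s2).tsum_eq_zero_add, ← tsum_mul_left]
      simp only [pow_zero, sub_self, zero_add]
      refine tsum_congr fun n => ?_
      have h2 := qPoch_ne hq0 hq1 n
      have h3 := one_sub_ne hq0 hq1 n
      rw [qPoch_succ]
      field_simp
      ring
    linear_combination h1
  have hN : ∀ N : ℕ, f z * qPoch z q N = f (z * (q : ℂ) ^ N) := by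
    intro N
    induction N with
    | zero => simp [qPoch]
    | succ N ih =>
      rw [qPoch_succ, ← mul_assoc, ih, step, pow_succ, mul_assoc]
      rw [norm_mul, norm_pow, hqn]
      exact (mul_le_of_le_one_right (norm_nonneg _) (pow_le_one₀ hq0.le hq1.le)).trans_lt hz
  have l1 := (tendsto_qPoch hq0 hq1 z).const_mul (f z)
  have l2 := tendsto_powerSeries hq0 hq1 (summable_inv hq0 hq1 hz)
  simp only [hN] at l1
  exact (tendsto_nhds_unique l1 l2).trans (by simp [qPoch])

/-- Euler's series `∑ q^{n(n-1)/2} (-z)ⁿ/(q;q)_n`, equal to `(z;q)_∞` by `euler_eq`. -/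
noncomputable def euler (q : ℝ) (z : ℂ) : ℂ :=
  ∑' n : ℕ, (q : ℂ) ^ ((n : ℤ) * (n - 1) / 2) * (-1) ^ n * (qPoch (q : ℂ) q n)⁻¹ * z ^ n

lemma euler_step (hq0 : 0 < q) (hq1 : q < 1) (z : ℂ) :
    euler q z = (1 - z) * euler q (z * q) := by
  have hqc : (q : ℂ) ≠ 0 := by exact_mod_cast hq0.ne'
  have s1 := (summable_euler hq0 hq1 z).of_norm
  have s2 := (summable_euler hq0 hq1 (z * q)).of_norm
  have h1 : euler q z - euler q (z * q) = -z * euler q (z * q) := by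
    simp only [euler]
    rw [← s1.tsum_sub s2, (s1.sub s2).tsum_eq_zero_add, ← tsum_mul_left]
    simp only [pow_zero, sub_self, zero_add]
    refine tsum_congr fun n => ?_
    have h3 := inv_mul_cancel₀ (one_sub_ne hq0 hq1 n)
    simp only [Nat.cast_succ]
    rw [qPoch_succ, tri_succ, zpow_add₀ hqc, zpow_natCast, mul_inv]
    linear_combination -(q : ℂ) ^ ((n : ℤ) * (n - 1) / 2) * q ^ n * (-1) ^ n *
      (qPoch (q : ℂ) q n)⁻¹ * z ^ n * z * h3
  linear_combination h1

lemma euler_eq (hq0 : 0 < q) (hq1 : q < 1) (z : ℂ) : euler q z = qPochInf z q := by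
  have hN : ∀ N : ℕ, euler q z = qPoch z q N * euler q (z * (q : ℂ) ^ N) := by
    intro N
    induction N with
    | zero => simp [qPoch]
    | succ N ih => rw [ih, qPoch_succ, euler_step hq0 hq1, pow_succ, mul_assoc, mul_assoc]
  have l2 := (tendsto_qPoch hq0 hq1 z).mul
    (tendsto_powerSeries hq0 hq1 (summable_euler hq0 hq1 z))
  have l1 : Tendsto (fun _ : ℕ => euler q z) atTop (𝓝 (euler q z)) := tendsto_const_nhds
  have := tendsto_nhds_unique l1 (l2.congr fun N => (hN N).symm)
  simpa [qPoch] using this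

/-! ### The Laurent coefficients of the kernel -/

/-- The coefficient of `t^{-k}` in `θ(q,-α/t)/(1/t;q)_∞` is `(q/α;q)_∞ (α;q)_k`. Completing the
square turns the convolution into Euler's series at `q^{1-k}/α`, whose functional equation then
gives the recursion in `k`. -/
lemma coeff_eq (hq0 : 0 < q) (hq1 : q < 1) {α : ℂ} (hα : α ≠ 0) (k : ℕ) :
    ∑' n : ℕ, (qPoch (q : ℂ) q n)⁻¹ *
      ((q : ℂ) ^ (((k : ℤ) - n) * ((k : ℤ) - n - 1) / 2) * (-α) ^ ((k : ℤ) - n)) =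
    qPochInf (q / α) q * qPoch α q k := by
  have hqc : (q : ℂ) ≠ 0 := by exact_mod_cast hq0.ne'
  have hα' : -α ≠ 0 := neg_ne_zero.2 hα
  have h1 : ∀ k : ℕ, ∑' n : ℕ, (qPoch (q : ℂ) q n)⁻¹ *
      ((q : ℂ) ^ (((k : ℤ) - n) * ((k : ℤ) - n - 1) / 2) * (-α) ^ ((k : ℤ) - n)) =
      (q : ℂ) ^ ((k : ℤ) * (k - 1) / 2) * (-α) ^ k * euler q ((q : ℂ) ^ (1 - (k : ℤ)) / α) := by
    intro k
    rw [euler, ← tsum_mul_left]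
    refine tsum_congr fun n => ?_
    rw [tri_sub, zpow_add₀ hqc, zpow_add₀ hqc, zpow_sub₀ hα', zpow_natCast, zpow_natCast, div_pow,
      ← zpow_natCast ((q : ℂ) ^ (1 - (k : ℤ))) n, ← zpow_mul, mul_comm (1 - (k : ℤ)) (n : ℤ),
      neg_pow α n, div_eq_mul_inv, div_eq_mul_inv, mul_inv]
    have : ((-1 : ℂ) ^ n)⁻¹ = (-1) ^ n := by rw [← inv_pow]; norm_num
    rw [this]
    ring
  rw [h1]
  induction k with
  | zero => simp [qPoch, euler_eq hq0 hq1]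
  | succ k ih =>
    have h2 : (q : ℂ) ^ (1 - ((k : ℤ) + 1)) / α * q = (q : ℂ) ^ (1 - (k : ℤ)) / α := by
      rw [show (1 - (k : ℤ)) = (1 - (k + 1)) + 1 by ring, zpow_add₀ hqc, zpow_one]; ring
    have h3 : (q : ℂ) ^ (1 - ((k : ℤ) + 1)) = ((q : ℂ) ^ k)⁻¹ := by
      rw [show (1 - ((k : ℤ) + 1)) = -k by ring, zpow_neg, zpow_natCast]
    simp only [Nat.cast_succ]
    rw [qPoch_succ, ← mul_assoc, ← ih, tri_succ, zpow_add₀ hqc, euler_step hq0 hq1, h2, h3,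
      zpow_natCast, pow_succ]
    have : (q : ℂ) ^ k ≠ 0 := pow_ne_zero _ hqc
    field_simp
    ring

/-! ### Term-by-term integration over the circle -/

/-- Integrating an absolutely convergent sum of monomials over `|t| = R` picks out the terms of
exponent `-1`. -/
lemma hasSum_residue {ι : Type*} [Countable ι] (c : ι → ℂ) (e : ι → ℤ) {R : ℝ} (hR : 0 < R)
    (f : ℂ → ℂ) (hs : Summable fun i => ‖c i‖ * R ^ e i)
    (hf : ∀ t : ℂ, ‖t‖ = R → HasSum (fun i => c i * t ^ e i) (f t)) :
    HasSum (fun i => if e i = -1 then c i else 0)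
      ((2 * (Real.pi : ℂ) * Complex.I)⁻¹ * ∮ t in C(0, R), f t) := by
  have hne : ∀ θ, circleMap 0 R θ ≠ 0 := fun θ => circleMap_ne_center hR.ne'
  have hn : ∀ θ, ‖circleMap 0 R θ‖ = R := fun θ => by simp [abs_of_pos hR]
  have key : HasSum (fun i => ∮ t in C(0, R), c i * t ^ e i) (∮ t in C(0, R), f t) := by
    simp only [circleIntegral]
    refine intervalIntegral.hasSum_integral_of_dominated_convergence
      (fun i _ => R * (‖c i‖ * R ^ e i)) (fun i => ?_) (fun i => ?_) ?_ ?_ ?_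
    · refine Continuous.aestronglyMeasurable ?_
      simp only [deriv_circleMap, smul_eq_mul]
      refine ((continuous_circleMap 0 R).mul continuous_const).mul (continuous_const.mul ?_)
      exact (continuous_circleMap 0 R).zpow₀ _ fun θ => Or.inl (hne θ)
    · refine Eventually.of_forall fun θ _ => le_of_eq ?_
      simp [abs_of_pos hR]
    · exact Eventually.of_forall fun θ _ => hs.mul_left R
    · exact intervalIntegrable_const
    · exact Eventually.of_forall fun θ _ => (hf _ (hn θ)).const_smul _
  have hi := key.mul_left (2 * (Real.pi : ℂ) * Complex.I)⁻¹
  suffices he : ∀ i, (2 * (Real.pi : ℂ) * Complex.I)⁻¹ * (∮ t in C(0, R), c i * t ^ e i) =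
      if e i = -1 then c i else 0 by simpa only [he] using hi
  intro i
  rw [circleIntegral.integral_const_mul]
  split_ifs with h
  · have h0 := circleIntegral.integral_sub_center_inv (0 : ℂ) hR.ne'
    simp only [sub_zero] at h0
    simp only [h, zpow_neg_one, h0]
    have := Complex.two_pi_I_ne_zero
    field_simp
  · have h0 := circleIntegral.integral_sub_zpow_of_ne h 0 0 R
    simp only [sub_zero] at h0
    rw [h0, mul_zero, mul_zero]

/-! ### The contour integral -/

lemma qpow_ne (q : ℝ) (μ : ℂ) : qpow q μ ≠ 0 := Complex.exp_ne_zero _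

lemma qpow_one_sub (hq0 : 0 < q) (μ : ℂ) : qpow q (1 - μ) = q / qpow q μ := by
  rw [qpow, qpow, sub_mul, one_mul, Complex.exp_sub, ← Complex.ofReal_exp, Real.exp_log hq0]

/-- Multiplying the expansions of `e^{-xt}`, `1/(1/t;q)_∞` and `θ(q,-α/t)` gives the Laurent
expansion of the integrand, indexed by `((k, n), m)`. -/
lemma integrand_hasSum (hq0 : 0 < q) (hq1 : q < 1) {α : ℂ} (hα : α ≠ 0) (x : ℂ) {t : ℂ}
    (ht : 1 < ‖t‖) :
    (Summable fun p : (ℕ × ℕ) × ℤ =>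
      ‖(-x) ^ p.1.1 / (p.1.1.factorial : ℂ) * (qPoch (q : ℂ) q p.1.2)⁻¹ *
        ((q : ℂ) ^ (p.2 * (p.2 - 1) / 2) * (-α) ^ p.2)‖ *
          ‖t‖ ^ ((p.1.1 : ℤ) - p.1.2 - p.2 - 1)) ∧
    HasSum (fun p : (ℕ × ℕ) × ℤ =>
      (-x) ^ p.1.1 / (p.1.1.factorial : ℂ) * (qPoch (q : ℂ) q p.1.2)⁻¹ *
        ((q : ℂ) ^ (p.2 * (p.2 - 1) / 2) * (-α) ^ p.2) * t ^ ((p.1.1 : ℤ) - p.1.2 - p.2 - 1))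
      (theta q (-(α / t)) / qPochInf (1 / t) q * Complex.exp (-(x * t)) / t) := by
  have ht0 : t ≠ 0 := norm_pos_iff.1 (one_pos.trans ht)
  have htn : ‖1 / t‖ < 1 := by
    rw [norm_div, norm_one]; exact (div_lt_one (one_pos.trans ht)).2 ht
  have hy : -(α / t) ≠ 0 := neg_ne_zero.2 (div_ne_zero hα ht0)
  have a1 := NormedSpace.norm_expSeries_div_summable (-(x * t))
  have a2 := summable_inv hq0 hq1 htn
  have a3 := summable_theta hq0 hq1 hy
  have b1 : HasSum (fun n : ℕ => (-(x * t)) ^ n / (n.factorial : ℂ)) (Complex.exp (-(x * t))) := by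
    rw [Complex.exp_eq_exp_ℂ]; exact NormedSpace.expSeries_div_hasSum_exp _
  have b2 := a2.of_norm.hasSum
  have b3 := a3.of_norm.hasSum
  have a12 := Summable.mul_norm a1 a2
  have a123 := Summable.mul_norm a12 a3
  have b := ((b1.mul b2 a12.of_norm).mul b3 a123.of_norm).div_const t
  have hterm : ∀ p : (ℕ × ℕ) × ℤ,
      (-(x * t)) ^ p.1.1 / (p.1.1.factorial : ℂ) * ((qPoch (q : ℂ) q p.1.2)⁻¹ * (1 / t) ^ p.1.2) *
        ((q : ℂ) ^ (p.2 * (p.2 - 1) / 2) * (-(α / t)) ^ p.2) / t =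
      (-x) ^ p.1.1 / (p.1.1.factorial : ℂ) * (qPoch (q : ℂ) q p.1.2)⁻¹ *
        ((q : ℂ) ^ (p.2 * (p.2 - 1) / 2) * (-α) ^ p.2) *
          t ^ ((p.1.1 : ℤ) - p.1.2 - p.2 - 1) := by
    rintro ⟨⟨k, n⟩, m⟩
    dsimp only
    rw [zpow_sub₀ ht0, zpow_sub₀ ht0, zpow_sub₀ ht0, zpow_natCast, zpow_natCast, zpow_one,
      ← neg_mul, mul_pow, ← neg_div, div_zpow, div_pow, one_pow]
    field_simp
  simp only [hterm] at b
  constructor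
  · have := a123.div_const ‖t‖
    simp only [← norm_div, hterm] at this
    refine (summable_congr fun p => ?_).1 this
    rw [norm_mul _ (t ^ _), norm_zpow]
  · have h1 := inv_series_mul hq0 hq1 htn
    have h2 : qPochInf (1 / t) (q : ℂ) ≠ 0 := right_ne_zero_of_mul (h1.symm ▸ one_ne_zero)
    rw [eq_inv_of_mul_eq_one_left h1] at b
    refine Eq.mp (congrArg (fun v => HasSum _ v _) ?_) b
    rw [theta]
    field_simp

/-- Picking out the terms `m = k - n` of the expansion evaluates the contour integral. -/
lemma integral_eq (hq0 : 0 < q) (hq1 : q < 1) (μ : ℂ) {R : ℝ} (hR : 1 < R) (x : ℂ) :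
    (2 * (Real.pi : ℂ) * Complex.I)⁻¹ *
        (∮ t in C(0, R),
          theta q (-(qpow q μ / t)) / qPochInf (1 / t) (q : ℂ) * Complex.exp (-(x * t)) / t) =
      qPochInf (qpow q (1 - μ)) (q : ℂ) * F μ q x := by
  have hR0 : 0 < R := one_pos.trans hR
  have hα := qpow_ne q μ
  have hs := (integrand_hasSum hq0 hq1 hα x (t := (R : ℂ)) (by simpa [abs_of_pos hR0] using hR)).1
  simp only [Complex.norm_real, Real.norm_of_nonneg hR0.le] at hs
  have h := hasSum_residue _ _ hR0 _ hs
    (fun t ht => (integrand_hasSum hq0 hq1 hα x (ht ▸ hR)).2)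
  have h' : ∀ p : ℕ × ℕ, HasSum (fun m : ℤ =>
      if (p.1 : ℤ) - p.2 - m - 1 = -1 then
        (-x) ^ p.1 / (p.1.factorial : ℂ) * (qPoch (q : ℂ) q p.2)⁻¹ *
          ((q : ℂ) ^ (m * (m - 1) / 2) * (-qpow q μ) ^ m) else 0)
      ((-x) ^ p.1 / (p.1.factorial : ℂ) * (qPoch (q : ℂ) q p.2)⁻¹ *
          ((q : ℂ) ^ (((p.1 : ℤ) - p.2) * ((p.1 : ℤ) - p.2 - 1) / 2) *
            (-qpow q μ) ^ ((p.1 : ℤ) - p.2))) := by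
    intro p
    convert hasSum_single ((p.1 : ℤ) - p.2) ?_ using 1
    · simp
    · intro m hm
      rw [if_neg]
      contrapose! hm
      linarith
  have h2 := h.prod_fiberwise h'
  rw [← h2.tsum_eq, h2.summable.tsum_prod, F, ← tsum_mul_left]
  refine tsum_congr fun k => ?_
  simp only [mul_assoc]
  rw [tsum_mul_left, coeff_eq hq0 hq1 hα, qpow_one_sub hq0]
  ring

/-! ### Uniqueness -/

/-- Differentiating the equation `n` times at `0` determines every Taylor coefficient. -/
lemma entire_solution_eq (μ : ℂ) {Y : ℂ → ℂ} (hY : Differentiable ℂ Y)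
    (h : ∀ x : ℂ, deriv Y x = qpow q μ * Y ((q : ℂ) * x) - Y x) (x : ℂ) :
    Y x = Y 0 * F μ q x := by
  have hc : ∀ n : ℕ, ContDiff ℂ n Y := fun n => hY.contDiff
  have hd : ∀ n, iteratedDeriv n Y 0 = Y 0 * (qPoch (qpow q μ) q n * (-1) ^ n) := by
    intro n
    induction n with
    | zero => simp [qPoch]
    | succ n ih =>
      have hc' : ContDiff ℂ n fun x => Y ((q : ℂ) * x) := (hc n).comp (contDiff_const.mul contDiff_id)
      rw [iteratedDeriv_succ', funext h,
        iteratedDeriv_fun_sub (contDiff_const.mul hc').contDiffAt (hc n).contDiffAt,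
        iteratedDeriv_const_mul_field, iteratedDeriv_comp_const_mul (hc n)]
      simp only [mul_zero, ih, qPoch_succ]
      ring
  rw [← Complex.taylorSeries_eq_of_entire' (c := 0) (z := x) hY, F, ← tsum_mul_left]
  refine tsum_congr fun n => ?_
  rw [hd, sub_zero, neg_pow x n, div_eq_mul_inv]
  ring

end

/-- the contour integral `(1/2πi) ∮_{|t|=R} θ(q,-q^μ/t)/((1/t;q)_∞) e^{-xt} dt/t`
equals `(q^{1-μ};q)_∞ F(μ;q,x)`; it is the unique entire solution of
`y' = q^μ y(q·) - y` with `y(0) = (q^{1-μ};q)_∞`. -/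
theorem stmt14 (q : ℝ) (hq0 : 0 < q) (hq1 : q < 1)
    (μ : ℂ) (R : ℝ) (hR : 1 < R) :
    (∀ x : ℂ,
      (2 * (Real.pi : ℂ) * Complex.I)⁻¹ *
        (∮ t in C(0, R),
          theta q (-(qpow q μ / t)) / qPochInf (1 / t) (q : ℂ) * Complex.exp (-(x * t)) / t) =
      qPochInf (qpow q (1 - μ)) (q : ℂ) * F μ q x) ∧
    (∀ Y : ℂ → ℂ, Differentiable ℂ Y →
      (∀ x : ℂ, deriv Y x = qpow q μ * Y ((q : ℂ) * x) - Y x) →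
      Y 0 = qPochInf (qpow q (1 - μ)) (q : ℂ) →
      ∀ x : ℂ, Y x = qPochInf (qpow q (1 - μ)) (q : ℂ) * F μ q x) := by
  refine ⟨integral_eq hq0 hq1 μ hR, fun Y hY h h0 x => ?_⟩
  rw [entire_solution_eq μ hY h x, h0]
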